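/- Let z₁ < ⋯ < z_K (K ≥ 2) be a grid with Cramér projection Π_C, let η_C be the unique fixed point of Π_C T^π, and let η_π be a return distribution function satisfying T^π η_π = η_π. Suppose for some δ > 0 and q ≥ 0 that each η_π^{(x,a)} is supported on [z₁ − δ, z_K + δ] and η_π^{(x,a)}([z₁−δ, z₁] ∪ [z_K, z_K+δ]) ≤ q for all (x,a) ∈ X×A. Then ℓ̄₂²(η_C, η_π) ≤ (1/(1−γ)) · ( max_{1 ≤ i < K} (z_{i+1} − z_i) + 2q²δ ). -/

import Mathlib

open MeasureTheory Filter Set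

noncomputable section

/-- The cumulative distribution function of a measure on ℝ. -/
def cdfFn (ν : Measure ℝ) (y : ℝ) : ℝ := (ν (Set.Iic y)).toReal

/-- The Cramér distance `ℓ₂` between two measures on ℝ. -/
def cramerDist (ν₁ ν₂ : Measure ℝ) : ℝ :=
  Real.sqrt (∫ x, (cdfFn ν₁ x - cdfFn ν₂ x) ^ 2)

/-- The hat functions associated with the grid `z 0 < z 1 < ⋯ < z (K-1)`. -/
def hatFn (K : ℕ) (z : ℕ → ℝ) (i : ℕ) (x : ℝ) : ℝ :=
  if i = 0 ∧ x ≤ z 0 then 1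
  else if i = K - 1 ∧ z (K - 1) ≤ x then 1
  else if i + 1 < K ∧ z i ≤ x ∧ x ≤ z (i + 1) then (z (i + 1) - x) / (z (i + 1) - z i)
  else if 0 < i ∧ z (i - 1) ≤ x ∧ x ≤ z i then (x - z (i - 1)) / (z i - z (i - 1))
  else 0

/-- The Cramér projection onto the grid `z 0 < z 1 < ⋯ < z (K-1)`. -/
def cramerProj (K : ℕ) (z : ℕ → ℝ) (ν : Measure ℝ) : Measure ℝ :=
  ∑ i ∈ Finset.range K, (ENNReal.ofReal (∫ w, hatFn K z i w ∂ν)) • Measure.dirac (z i)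

/-- The distributional Bellman operator. -/
def bellmanOp {X A : Type} [Fintype X] [Fintype A] [MeasurableSpace X] [MeasurableSpace A]
    (γ : ℝ) (p : X × A → Measure (ℝ × X)) (pol : X → Measure A)
    (η : X × A → Measure ℝ) (xa : X × A) : Measure ℝ :=
  (p xa).bind (fun rx' => ∑ a' : A, (pol rx'.2 {a'}) • (η (rx'.2, a')).map (fun t => rx'.1 + γ * t))

/-- The supremum-Cramér metric between return distribution functions. -/
def supCramer {X A : Type} [Fintype X] [Fintype A] (η μ : X × A → Measure ℝ) : ℝ :=
  ⨆ xa : X × A, cramerDist (η xa) (μ xa)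

/-- Square-integrable tails of the CDF. -/
def sqIntTails (ν : Measure ℝ) : Prop :=
  IntegrableOn (fun x => (cdfFn ν x) ^ 2) (Set.Iic 0) ∧
  IntegrableOn (fun x => (1 - cdfFn ν x) ^ 2) (Set.Ici 0)

/-!
On a cell of the grid, the cumulative distribution function of `Π_C ν` is constant, equal to the
mean over the cell of that of `ν`. Replacing `F_ν` by its cell means increases its squared
`L²`-distance to `F_μ` on a cell by at most the length of the cell times the variance of `F_μ` on
it; by Popoviciu's inequality these costs add up to at most the mesh. Outside the grid `Π_C ν`
carries no mass, and the distance is governed by the tails of `μ`, at most `q` on an interval of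
length `δ` on either side.

The squared Cramér distance is convex under mixtures (Jensen) and is multiplied by `γ` under
`t ↦ r + γ t`, so `T^π` contracts its supremum over `X × A` by `γ`. The supremum `E` of the squared
distances between the fixed points thus satisfies `E ≤ γ E + B`, where `B` is the projection error.
-/

open scoped ENNReal ProbabilityTheory

section CdfFn

variable {ν : Measure ℝ} {a b y : ℝ}

lemma cdfFn_nonneg (ν : Measure ℝ) (y : ℝ) : 0 ≤ cdfFn ν y := ENNReal.toReal_nonneg

lemma cdfFn_le_one (ν : Measure ℝ) [IsProbabilityMeasure ν] (y : ℝ) : cdfFn ν y ≤ 1 :=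
  measureReal_le_one

lemma monotone_cdfFn (ν : Measure ℝ) [IsFiniteMeasure ν] : Monotone (cdfFn ν) :=
  fun _ _ h => measureReal_mono (Iic_subset_Iic.2 h)

@[fun_prop]
lemma measurable_cdfFn (ν : Measure ℝ) [IsFiniteMeasure ν] : Measurable (cdfFn ν) :=
  (monotone_cdfFn ν).measurable

lemma memLp_cdfFn (ν : Measure ℝ) [IsProbabilityMeasure ν] (P : Measure ℝ) [IsFiniteMeasure P]
    (r : ℝ≥0∞) : MemLp (cdfFn ν) r P :=
  memLp_of_bounded (ae_of_all P fun y => ⟨cdfFn_nonneg ν y, cdfFn_le_one ν y⟩)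
    (measurable_cdfFn ν).aestronglyMeasurable r

lemma one_sub_cdfFn (ν : Measure ℝ) [IsProbabilityMeasure ν] (y : ℝ) :
    1 - cdfFn ν y = ν.real (Ioi y) := by
  rw [← compl_Iic, probReal_compl_eq_one_sub measurableSet_Iic]
  rfl

lemma abs_cdfFn_sub_cdfFn_le_one (μ ν : Measure ℝ) [IsProbabilityMeasure μ]
    [IsProbabilityMeasure ν] (y : ℝ) : |cdfFn μ y - cdfFn ν y| ≤ 1 :=
  abs_le.2 ⟨by linarith [cdfFn_nonneg μ y, cdfFn_le_one ν y],
    by linarith [cdfFn_le_one μ y, cdfFn_nonneg ν y]⟩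

lemma cdfFn_eq_zero_of_lt (hν : ∀ᵐ t ∂ν, a ≤ t) (hy : y < a) : cdfFn ν y = 0 := by
  have hnull : ν (Iic y) = 0 :=
    measure_mono_null (fun _ ht => not_le.2 (lt_of_le_of_lt ht hy)) hν
  rw [cdfFn, hnull, ENNReal.toReal_zero]

lemma cdfFn_eq_one_of_le [IsProbabilityMeasure ν] (hν : ∀ᵐ t ∂ν, t ≤ b) (hy : b ≤ y) :
    cdfFn ν y = 1 := by
  have hnull : ν (Ioi y) = 0 :=
    measure_mono_null (fun _ ht => not_le.2 (lt_of_le_of_lt hy ht)) hν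
  linarith [one_sub_cdfFn ν y, (measureReal_eq_zero_iff (measure_ne_top ν _)).2 hnull]

lemma cdfFn_le_and_one_sub_cdfFn_le_of_excess [IsProbabilityMeasure ν] {a' b' q : ℝ}
    (hν : ∀ᵐ t ∂ν, t ∈ Icc a' b') (hq : 0 ≤ q)
    (hexcess : ν (Icc a' a ∪ Icc b b') ≤ ENNReal.ofReal q) :
    cdfFn ν a ≤ q ∧ 1 - cdfFn ν b ≤ q := by
  rw [one_sub_cdfFn]
  refine ⟨ENNReal.toReal_le_of_le_ofReal hq (le_trans (measure_mono_ae ?_) hexcess),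
    ENNReal.toReal_le_of_le_ofReal hq (le_trans (measure_mono_ae ?_) hexcess)⟩
  · filter_upwards [hν] with t ht hta using Or.inl ⟨ht.1, hta⟩
  · filter_upwards [hν] with t ht hbt using Or.inr ⟨le_of_lt hbt, ht.2⟩

lemma cdfFn_map_const_add_mul {γ : ℝ} (hγ : 0 < γ) (r : ℝ) (ν : Measure ℝ) (y : ℝ) :
    cdfFn (ν.map fun t => r + γ * t) y = cdfFn ν (γ⁻¹ * (y - r)) := by
  have hpre : (fun t => r + γ * t) ⁻¹' Iic y = Iic (γ⁻¹ * (y - r)) := by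
    ext t
    rw [mem_preimage, mem_Iic, mem_Iic, le_inv_mul_iff₀ hγ, le_sub_iff_add_le']
  rw [cdfFn, Measure.map_apply (by fun_prop) measurableSet_Iic, hpre, cdfFn]

lemma integral_cdfFn_eq_integral_real_Ici (μ ν : Measure ℝ) [IsFiniteMeasure μ]
    [IsFiniteMeasure ν] : ∫ y, cdfFn ν y ∂μ = ∫ t, μ.real (Ici t) ∂ν := by
  have hle : MeasurableSet {p : ℝ × ℝ | p.1 ≤ p.2} := measurableSet_le measurable_fst measurable_snd
  calc ∫ y, cdfFn ν y ∂μ = (∫⁻ y, ν (Iic y) ∂μ).toReal :=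
        integral_toReal (measurable_measure_prodMk_right hle).aemeasurable
          (ae_of_all _ fun _ => measure_lt_top ν _)
    _ = (∫⁻ t, μ (Ici t) ∂ν).toReal := by
        congr 1
        exact (Measure.prod_apply_symm hle).symm.trans (Measure.prod_apply hle)
    _ = ∫ t, μ.real (Ici t) ∂ν :=
        (integral_toReal (measurable_measure_prodMk_left hle).aemeasurable
          (ae_of_all _ fun _ => measure_lt_top μ _)).symm

end CdfFn

lemma sq_integral_le_integral_sq {Ω : Type*} [MeasurableSpace Ω] {P : Measure Ω}
    [IsProbabilityMeasure P] {X : Ω → ℝ} (hX : MemLp X 2 P) :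
    (∫ ω, X ω ∂P) ^ 2 ≤ ∫ ω, X ω ^ 2 ∂P :=
  sub_nonneg.1 (ProbabilityTheory.variance_eq_sub hX ▸ ProbabilityTheory.variance_nonneg X P)

-- Subtracting `P[X] - P[Y]` splits the left side as `(P[X] - P[Y]) ^ 2 + Var[Y]`.
lemma integral_sq_integral_sub_le {Ω : Type*} [MeasurableSpace Ω] {P : Measure Ω}
    [IsProbabilityMeasure P] {X Y : Ω → ℝ} (hX : MemLp X 2 P) (hY : MemLp Y 2 P) :
    ∫ ω, (P[X] - Y ω) ^ 2 ∂P ≤ ∫ ω, (X ω - Y ω) ^ 2 ∂P + Var[Y; P] := by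
  have hvar : Var[Y; P] = ∫ ω, (P[X] - Y ω) ^ 2 ∂P - (∫ ω, (P[X] - Y ω) ∂P) ^ 2 := by
    rw [← ProbabilityTheory.variance_const_sub hY.aestronglyMeasurable P[X]]
    exact ProbabilityTheory.variance_eq_sub ((memLp_const P[X]).sub hY)
  have hmean : ∫ ω, (P[X] - Y ω) ∂P = ∫ ω, (X ω - Y ω) ∂P := by
    have hXi := hX.integrable one_le_two
    have hYi := hY.integrable one_le_two
    rw [integral_sub (integrable_const _) hYi, integral_sub hXi hYi, integral_const,
      probReal_univ, one_smul]
  have hjensen := sq_integral_le_integral_sq (hX.sub hY)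
  simp only [Pi.sub_apply] at hjensen
  rw [hmean] at hvar
  linarith

lemma setLIntegral_ofReal_sq_le {Ω : Type*} [MeasurableSpace Ω] {P : Measure Ω} {f : Ω → ℝ}
    {s t : Set Ω} {c : ℝ} (hs : MeasurableSet s) (hle : ∀ ω ∈ s, ω ∈ t → |f ω| ≤ c)
    (hzero : ∀ ω ∈ s, ω ∉ t → f ω = 0) :
    ∫⁻ ω in s, ENNReal.ofReal (f ω ^ 2) ∂P ≤ ENNReal.ofReal (c ^ 2) * P t := by
  calc ∫⁻ ω in s, ENNReal.ofReal (f ω ^ 2) ∂P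
      ≤ ∫⁻ ω in s, t.indicator (fun _ => ENNReal.ofReal (c ^ 2)) ω ∂P := by
        refine setLIntegral_mono' hs fun ω hω => ?_
        by_cases ht : ω ∈ t
        · rw [indicator_of_mem ht]
          exact ENNReal.ofReal_le_ofReal (sq_le_sq' (neg_le_of_abs_le (hle ω hω ht))
            (le_of_abs_le (hle ω hω ht)))
        · simp [ht, hzero ω hω ht]
    _ ≤ ∫⁻ ω, t.indicator (fun _ => ENNReal.ofReal (c ^ 2)) ω ∂P := setLIntegral_le_lintegral s _
    _ ≤ ENNReal.ofReal (c ^ 2) * P t := lintegral_indicator_const_le t _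

lemma lintegral_eq_Iio_add_Ico_add_Ici {a b : ℝ} (hab : a ≤ b) (f : ℝ → ℝ≥0∞) :
    ∫⁻ y, f y = (∫⁻ y in Iio a, f y) + (∫⁻ y in Ico a b, f y) + ∫⁻ y in Ici b, f y := by
  rw [← lintegral_add_compl f measurableSet_Iio, compl_Iio, ← Ico_union_Ici_eq_Ici hab,
    lintegral_union measurableSet_Ici
      (disjoint_left.2 fun _ hy hby => hy.2.not_ge hby), add_assoc]

lemma setLIntegral_Iio_sq_cdfFn_sub_le {ν μ : Measure ℝ} [IsFiniteMeasure μ] {a δ q : ℝ}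
    (hν : ∀ y < a, cdfFn ν y = 0) (hμ : ∀ᵐ t ∂μ, a - δ ≤ t) (hq : cdfFn μ a ≤ q) :
    ∫⁻ y in Iio a, ENNReal.ofReal ((cdfFn ν y - cdfFn μ y) ^ 2) ≤ ENNReal.ofReal (q ^ 2 * δ) := by
  have htail : ∫⁻ y in Iio a, ENNReal.ofReal ((cdfFn ν y - cdfFn μ y) ^ 2)
      ≤ ENNReal.ofReal (q ^ 2) * volume (Ico (a - δ) a) := by
    refine setLIntegral_ofReal_sq_le measurableSet_Iio (fun y hy _ => ?_) fun y hy hyt => ?_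
    · rw [hν y hy, zero_sub, abs_neg, abs_of_nonneg (cdfFn_nonneg μ y)]
      exact (monotone_cdfFn μ (le_of_lt hy)).trans hq
    · rw [hν y hy, cdfFn_eq_zero_of_lt hμ (not_le.1 fun h => hyt ⟨h, hy⟩), sub_self]
  rwa [Real.volume_Ico, sub_sub_cancel, ← ENNReal.ofReal_mul (sq_nonneg q)] at htail

lemma setLIntegral_Ici_sq_cdfFn_sub_le {ν μ : Measure ℝ} [IsProbabilityMeasure μ] {b δ q : ℝ}
    (hν : ∀ y, b ≤ y → cdfFn ν y = 1) (hμ : ∀ᵐ t ∂μ, t ≤ b + δ) (hq : 1 - cdfFn μ b ≤ q) :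
    ∫⁻ y in Ici b, ENNReal.ofReal ((cdfFn ν y - cdfFn μ y) ^ 2) ≤ ENNReal.ofReal (q ^ 2 * δ) := by
  have htail : ∫⁻ y in Ici b, ENNReal.ofReal ((cdfFn ν y - cdfFn μ y) ^ 2)
      ≤ ENNReal.ofReal (q ^ 2) * volume (Ico b (b + δ)) := by
    refine setLIntegral_ofReal_sq_le measurableSet_Ici (fun y hy _ => ?_) fun y hy hyt => ?_
    · rw [hν y hy, abs_of_nonneg (sub_nonneg.2 (cdfFn_le_one μ y))]
      linarith [monotone_cdfFn μ hy]
    · rw [hν y hy, cdfFn_eq_one_of_le hμ (not_lt.1 fun h => hyt ⟨hy, h⟩), sub_self]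
  rwa [Real.volume_Ico, add_sub_cancel_left, ← ENNReal.ofReal_mul (sq_nonneg q)] at htail

/-- The squared Cramér distance as an extended nonnegative real. Unlike the Bochner integral behind
`cramerDist`, it is `∞` rather than `0` at infinite distance, and Tonelli's theorem applies to it
without integrability conditions. -/
def cramerEnergy (μ ν : Measure ℝ) : ℝ≥0∞ :=
  ∫⁻ y, ENNReal.ofReal ((cdfFn μ y - cdfFn ν y) ^ 2)

section CramerEnergy

open ProbabilityTheory

lemma cramerDist_eq_sqrt_toReal_cramerEnergy (μ ν : Measure ℝ) [IsFiniteMeasure μ]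
    [IsFiniteMeasure ν] : cramerDist μ ν = √(cramerEnergy μ ν).toReal := by
  rw [cramerDist, cramerEnergy, integral_eq_lintegral_of_nonneg_ae
    (ae_of_all _ fun _ => sq_nonneg _) (by fun_prop)]

lemma cramerEnergy_ne_top_of_ae_mem_Icc {μ ν : Measure ℝ} [IsProbabilityMeasure μ]
    [IsProbabilityMeasure ν] {a b : ℝ} (hμ : ∀ᵐ t ∂μ, t ∈ Icc a b) (hν : ∀ᵐ t ∂ν, t ∈ Icc a b) :
    cramerEnergy μ ν ≠ ∞ := by
  have hout : ∀ y ∉ Icc a b, cdfFn μ y - cdfFn ν y = 0 := by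
    intro y hy
    rcases lt_or_ge y a with hya | hya
    · rw [cdfFn_eq_zero_of_lt (hμ.mono fun _ h => h.1) hya,
        cdfFn_eq_zero_of_lt (hν.mono fun _ h => h.1) hya, sub_self]
    · have hby : b ≤ y := (not_le.1 fun h => hy ⟨hya, h⟩).le
      rw [cdfFn_eq_one_of_le (hμ.mono fun _ h => h.2) hby,
        cdfFn_eq_one_of_le (hν.mono fun _ h => h.2) hby, sub_self]
  have hle := setLIntegral_ofReal_sq_le (P := volume) (c := 1) MeasurableSet.univ
    (fun y _ _ => abs_cdfFn_sub_cdfFn_le_one μ ν y) (fun y _ hy => hout y hy)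
  rw [Measure.restrict_univ] at hle
  exact ne_top_of_le_ne_top (ENNReal.mul_ne_top ENNReal.ofReal_ne_top measure_Icc_lt_top.ne) hle

lemma cramerEnergy_map_const_add_mul {γ : ℝ} (hγ : 0 ≤ γ) (r : ℝ) (μ ν : Measure ℝ)
    [IsProbabilityMeasure μ] [IsProbabilityMeasure ν] :
    cramerEnergy (μ.map fun t => r + γ * t) (ν.map fun t => r + γ * t)
      = ENNReal.ofReal γ * cramerEnergy μ ν := by
  rcases hγ.eq_or_lt with rfl | hγ
  · simp [cramerEnergy, Measure.map_const]
  let D : ℝ → ℝ≥0∞ := fun y => ENNReal.ofReal ((cdfFn μ y - cdfFn ν y) ^ 2)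
  have hD : Measurable D := by fun_prop
  calc cramerEnergy (μ.map fun t => r + γ * t) (ν.map fun t => r + γ * t)
      = ∫⁻ y, D (γ⁻¹ * (y - r)) := by
        simp only [cramerEnergy, cdfFn_map_const_add_mul hγ, D]
    _ = ∫⁻ y, D (γ⁻¹ * y) := lintegral_sub_right_eq_self (fun y => D (γ⁻¹ * y)) r
    _ = ∫⁻ y, D y ∂volume.map (γ⁻¹ * ·) := (lintegral_map hD (by fun_prop)).symm
    _ = ENNReal.ofReal γ * cramerEnergy μ ν := by
        rw [Real.map_volume_mul_left (inv_ne_zero hγ.ne'), inv_inv, abs_of_pos hγ,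
          lintegral_smul_measure, smul_eq_mul, cramerEnergy]

variable {Ω : Type*} [MeasurableSpace Ω] {P : Measure Ω}

lemma measurable_cdfFn_kernel (κ : Kernel Ω ℝ) [IsFiniteKernel κ] :
    Measurable fun p : Ω × ℝ => cdfFn (κ p.1) p.2 :=
  (Kernel.measurable_kernel_prodMk_left (κ := κ.comap Prod.fst measurable_fst)
    (measurableSet_le (f := fun q : (Ω × ℝ) × ℝ => q.2) (g := fun q => q.1.2)
      (by fun_prop) (by fun_prop))).ennreal_toReal

lemma cdfFn_bind_kernel (κ : Kernel Ω ℝ) [IsFiniteKernel κ] (y : ℝ) :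
    cdfFn (P.bind κ) y = ∫ ω, cdfFn (κ ω) y ∂P := by
  unfold cdfFn
  rw [Measure.bind_apply measurableSet_Iic κ.aemeasurable, integral_toReal
    (κ.measurable_coe measurableSet_Iic).aemeasurable (ae_of_all _ fun ω => measure_lt_top _ _)]

-- Jensen's inequality at each point of the line, followed by Tonelli's theorem.
lemma cramerEnergy_bind_kernel_le [IsProbabilityMeasure P] (κ η : Kernel Ω ℝ) [IsMarkovKernel κ]
    [IsMarkovKernel η] :
    cramerEnergy (P.bind κ) (P.bind η) ≤ ∫⁻ ω, cramerEnergy (κ ω) (η ω) ∂P := by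
  have hmeas := (measurable_cdfFn_kernel κ).sub (measurable_cdfFn_kernel η)
  have hLp : ∀ (ξ : Kernel Ω ℝ) [IsMarkovKernel ξ] y, MemLp (fun ω => cdfFn (ξ ω) y) 2 P :=
    fun ξ _ y => memLp_of_bounded (ae_of_all P fun ω => ⟨cdfFn_nonneg _ y, cdfFn_le_one _ y⟩)
      ((measurable_cdfFn_kernel ξ).comp measurable_prodMk_right).aestronglyMeasurable 2
  have hjensen : ∀ y, ENNReal.ofReal ((cdfFn (P.bind κ) y - cdfFn (P.bind η) y) ^ 2)
      ≤ ∫⁻ ω, ENNReal.ofReal ((cdfFn (κ ω) y - cdfFn (η ω) y) ^ 2) ∂P := by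
    intro y
    have hsub : MemLp (fun ω => cdfFn (κ ω) y - cdfFn (η ω) y) 2 P := (hLp κ y).sub (hLp η y)
    rw [cdfFn_bind_kernel, cdfFn_bind_kernel, ← integral_sub ((hLp κ y).integrable one_le_two)
      ((hLp η y).integrable one_le_two), ← ofReal_integral_eq_lintegral_ofReal hsub.integrable_sq
      (ae_of_all _ fun _ => sq_nonneg _)]
    exact ENNReal.ofReal_le_ofReal (sq_integral_le_integral_sq hsub)
  calc cramerEnergy (P.bind κ) (P.bind η)
      ≤ ∫⁻ y, ∫⁻ ω, ENNReal.ofReal ((cdfFn (κ ω) y - cdfFn (η ω) y) ^ 2) ∂P :=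
        lintegral_mono hjensen
    _ = ∫⁻ ω, cramerEnergy (κ ω) (η ω) ∂P :=
        lintegral_lintegral_swap
          ((hmeas.pow_const 2).comp measurable_swap).ennreal_ofReal.aemeasurable

lemma exists_isMarkovKernel_ae_eq {E : Type*} [MeasurableSpace E] [Nonempty E] {κ : Ω → Measure E}
    (hκ : AEMeasurable κ P) (hprob : ∀ᵐ ω ∂P, IsProbabilityMeasure (κ ω)) :
    ∃ κ' : Kernel Ω E, IsMarkovKernel κ' ∧ κ =ᵐ[P] κ' := by
  obtain ⟨g, hg, hrange, hκg⟩ := hκ.exists_ae_eq_range_subset hprob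
    ⟨Measure.dirac (Classical.arbitrary E), Measure.dirac.isProbabilityMeasure⟩
  exact ⟨⟨g, hg⟩, ⟨fun ω => hrange (mem_range_self ω)⟩, hκg⟩

lemma cramerEnergy_bind_le [IsProbabilityMeasure P] {κ η : Ω → Measure ℝ}
    (hκ : AEMeasurable κ P) (hη : AEMeasurable η P)
    (hκprob : ∀ᵐ ω ∂P, IsProbabilityMeasure (κ ω))
    (hηprob : ∀ᵐ ω ∂P, IsProbabilityMeasure (η ω)) :
    cramerEnergy (P.bind κ) (P.bind η) ≤ ∫⁻ ω, cramerEnergy (κ ω) (η ω) ∂P := by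
  obtain ⟨κ', _, hκκ'⟩ := exists_isMarkovKernel_ae_eq hκ hκprob
  obtain ⟨η', _, hηη'⟩ := exists_isMarkovKernel_ae_eq hη hηprob
  rw [Measure.bind_congr_right hκκ', Measure.bind_congr_right hηη']
  refine (cramerEnergy_bind_kernel_le κ' η').trans_eq (lintegral_congr_ae ?_)
  filter_upwards [hκκ', hηη'] with ω hκω hηω
  rw [hκω, hηω]

-- A finite mixture is the composition of a discrete measure on the index set with the components.
lemma cramerEnergy_sum_smul_le {ι : Type*} [Fintype ι] {w : ι → ℝ≥0∞} (hw : ∑ i, w i = 1)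
    (μ ν : ι → Measure ℝ) [∀ i, IsProbabilityMeasure (μ i)] [∀ i, IsProbabilityMeasure (ν i)] :
    cramerEnergy (∑ i, w i • μ i) (∑ i, w i • ν i) ≤ ∑ i, w i * cramerEnergy (μ i) (ν i) := by
  let _ : MeasurableSpace ι := ⊤
  let P : Measure ι := ∑ i, w i • Measure.dirac i
  have : IsProbabilityMeasure P := ⟨by simp [P, hw]⟩
  have hbind : ∀ ξ : ι → Measure ℝ, ∑ i, w i • ξ i = P.bind ξ := by
    intro ξ
    ext s hs
    simp [P, Measure.bind_apply hs (measurable_from_top (f := ξ)).aemeasurable]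
  have hP : ∫⁻ i, cramerEnergy (μ i) (ν i) ∂P = ∑ i, w i * cramerEnergy (μ i) (ν i) := by
    simp [P]
  rw [hbind, hbind, ← hP]
  exact cramerEnergy_bind_le measurable_from_top.aemeasurable measurable_from_top.aemeasurable
    (ae_of_all _ inferInstance) (ae_of_all _ inferInstance)

end CramerEnergy

/-- The uniform probability distribution on `[a, b)`. Its survival function is the linear ramp from
`1` at `a` to `0` at `b`, so that the hat functions of a grid are differences of such functions, and
integrating a function against it averages that function over a cell of the grid. -/
def uniformIco (a b : ℝ) : Measure ℝ := volume[|Ico a b]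

section UniformIco

open ProbabilityTheory

variable {a b t : ℝ}

lemma isProbabilityMeasure_uniformIco (h : a < b) : IsProbabilityMeasure (uniformIco a b) :=
  cond_isProbabilityMeasure_of_finite (by simp [h]) (by simp)

instance : IsFiniteMeasure (uniformIco a b) := by
  unfold uniformIco
  infer_instance

lemma ofReal_smul_uniformIco (h : a < b) :
    ENNReal.ofReal (b - a) • uniformIco a b = volume.restrict (Ico a b) := by
  rw [uniformIco, ProbabilityTheory.cond, Real.volume_Ico, smul_smul,
    ENNReal.mul_inv_cancel (by simpa using h) ENNReal.ofReal_ne_top, one_smul]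

lemma uniformIco_real_Ici (a b t : ℝ) :
    (uniformIco a b).real (Ici t) = max (b - max a t) 0 / max (b - a) 0 := by
  have hinter : Ico a b ∩ Ici t = Ico (max a t) b := by
    ext x
    simp only [mem_inter_iff, mem_Ico, mem_Ici, max_le_iff]
    tauto
  rw [measureReal_def, uniformIco, cond_apply measurableSet_Ico, hinter,
    ENNReal.toReal_mul, ENNReal.toReal_inv, ← measureReal_def, ← measureReal_def,
    Real.volume_real_Ico, Real.volume_real_Ico, inv_mul_eq_div]

lemma uniformIco_real_Ici_of_le_left (h : a < b) (ht : t ≤ a) :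
    (uniformIco a b).real (Ici t) = 1 := by
  rw [uniformIco_real_Ici, max_eq_left ht, max_eq_left (sub_pos.2 h).le, div_self (sub_pos.2 h).ne']

lemma uniformIco_real_Ici_of_mem_Icc (ht : t ∈ Icc a b) :
    (uniformIco a b).real (Ici t) = (b - t) / (b - a) := by
  rw [uniformIco_real_Ici, max_eq_right ht.1, max_eq_left (sub_nonneg.2 ht.2),
    max_eq_left (sub_nonneg.2 (ht.1.trans ht.2))]

lemma uniformIco_real_Ici_of_right_le (ht : b ≤ t) : (uniformIco a b).real (Ici t) = 0 := by
  rw [uniformIco_real_Ici, max_eq_right (sub_nonpos.2 (ht.trans (le_max_right a t))), zero_div]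

-- The cost of replacing `F_ν` by its mean on the cell is at most the variance of `F_μ` there, which
-- Popoviciu's inequality bounds.
lemma setLIntegral_sq_integral_cdfFn_sub_le (h : a < b) (ν μ : Measure ℝ) [IsProbabilityMeasure ν]
    [IsProbabilityMeasure μ] :
    ∫⁻ y in Ico a b, ENNReal.ofReal ((∫ s, cdfFn ν s ∂uniformIco a b - cdfFn μ y) ^ 2)
      ≤ (∫⁻ y in Ico a b, ENNReal.ofReal ((cdfFn ν y - cdfFn μ y) ^ 2))
        + ENNReal.ofReal ((b - a) * ((cdfFn μ b - cdfFn μ a) / 2) ^ 2) := by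
  have := isProbabilityMeasure_uniformIco h
  have hν := memLp_cdfFn ν (uniformIco a b) 2
  have hμ := memLp_cdfFn μ (uniformIco a b) 2
  have hvar : Var[cdfFn μ; uniformIco a b] ≤ ((cdfFn μ b - cdfFn μ a) / 2) ^ 2 := by
    refine variance_le_sq_of_bounded ?_ (measurable_cdfFn μ).aemeasurable
    filter_upwards [ae_cond_mem measurableSet_Ico] with y hy
    exact ⟨monotone_cdfFn μ hy.1, monotone_cdfFn μ hy.2.le⟩
  have hconst : MemLp (fun y => ∫ s, cdfFn ν s ∂uniformIco a b - cdfFn μ y) 2 (uniformIco a b) :=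
    (memLp_const _).sub hμ
  have hsub : MemLp (fun y => cdfFn ν y - cdfFn μ y) 2 (uniformIco a b) := hν.sub hμ
  have hofReal : ∀ {f : ℝ → ℝ}, MemLp f 2 (uniformIco a b) →
      ∫⁻ y in Ico a b, ENNReal.ofReal (f y ^ 2)
        = ENNReal.ofReal ((b - a) * ∫ y, f y ^ 2 ∂uniformIco a b) := fun hf => by
    rw [← ofReal_smul_uniformIco h, lintegral_smul_measure, smul_eq_mul,
      ENNReal.ofReal_mul (sub_pos.2 h).le,
      ofReal_integral_eq_lintegral_ofReal hf.integrable_sq (ae_of_all _ fun _ => sq_nonneg _)]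
  rw [hofReal hconst, hofReal hsub, ← ENNReal.ofReal_add (by have := sub_pos.2 h; positivity)
    (by have := sub_pos.2 h; positivity), ← mul_add]
  exact ENNReal.ofReal_le_ofReal (mul_le_mul_of_nonneg_left
    ((integral_sq_integral_sub_le hν hμ).trans (by gcongr)) (sub_pos.2 h).le)

end UniformIco

section Grid

variable {K : ℕ} {z : ℕ → ℝ}

lemma monotoneOn_grid (hz : ∀ i, i + 1 < K → z i < z (i + 1)) : MonotoneOn z (Iio K) :=
  (strictMonoOn_of_lt_succ ordConnected_Iio fun i _ _ hi => hz i hi).monotoneOn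

lemma ae_mem_Icc_of_ae_mem_grid (hz : ∀ i, i + 1 < K → z i < z (i + 1)) {δ : ℝ} (hδ : 0 ≤ δ)
    {ν : Measure ℝ} (hν : ∀ᵐ t ∂ν, ∃ i < K, t = z i) :
    ∀ᵐ t ∂ν, t ∈ Icc (z 0 - δ) (z (K - 1) + δ) := by
  filter_upwards [hν]
  rintro _ ⟨i, hi, rfl⟩
  have hfirst := monotoneOn_grid hz (mem_Iio.2 (by lia)) hi i.zero_le
  have hlast := monotoneOn_grid hz hi (mem_Iio.2 (by lia)) (Nat.le_sub_one_of_lt hi)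
  exact ⟨by linarith, by linarith⟩

lemma hatFn_nonneg (K : ℕ) (z : ℕ → ℝ) (i : ℕ) (x : ℝ) : 0 ≤ hatFn K z i x := by
  unfold hatFn
  split_ifs with h1 h2 h3 h4
  · exact zero_le_one
  · exact zero_le_one
  · exact div_nonneg (sub_nonneg.2 h3.2.2) (sub_nonneg.2 (h3.2.1.trans h3.2.2))
  · exact div_nonneg (sub_nonneg.2 h4.2.1) (sub_nonneg.2 (h4.2.1.trans h4.2.2))
  · exact le_rfl

lemma hatFn_le_one (K : ℕ) (z : ℕ → ℝ) (i : ℕ) (x : ℝ) : hatFn K z i x ≤ 1 := by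
  unfold hatFn
  split_ifs with h1 h2 h3 h4
  · exact le_rfl
  · exact le_rfl
  · exact div_le_one_of_le₀ (by linarith) (by linarith)
  · exact div_le_one_of_le₀ (by linarith) (by linarith)
  · exact zero_le_one

lemma measurable_hatFn (K : ℕ) (z : ℕ → ℝ) (i : ℕ) : Measurable (hatFn K z i) := by
  unfold hatFn
  refine .ite (by measurability) measurable_const ?_
  refine .ite (by measurability) measurable_const ?_
  refine .ite (by measurability) (by fun_prop) ?_
  exact .ite (by measurability) (by fun_prop) measurable_const

lemma integrable_hatFn (K : ℕ) (z : ℕ → ℝ) (i : ℕ) (ν : Measure ℝ) [IsFiniteMeasure ν] :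
    Integrable (hatFn K z i) ν :=
  Integrable.of_mem_Icc 0 1 (measurable_hatFn K z i).aemeasurable
    (ae_of_all _ fun x => ⟨hatFn_nonneg K z i x, hatFn_le_one K z i x⟩)

lemma hatFn_zero (hK : 1 < K) (h : z 0 < z 1) (x : ℝ) :
    hatFn K z 0 x = (uniformIco (z 0) (z 1)).real (Ici x) := by
  have hlast : 0 ≠ K - 1 := by lia
  rcases le_or_gt x (z 0) with hx0 | hx0
  · simp [hatFn, hx0, uniformIco_real_Ici_of_le_left h hx0]
  rcases le_or_gt x (z 1) with hx1 | hx1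
  · simp [hatFn, hx0.not_ge, hlast, hK, hx0.le, hx1, uniformIco_real_Ici_of_mem_Icc ⟨hx0.le, hx1⟩]
  · simp [hatFn, hx0.not_ge, hlast, hx1.not_ge, uniformIco_real_Ici_of_right_le hx1.le]

lemma hatFn_succ {j : ℕ} (hj : j + 2 < K) (h : z j < z (j + 1)) (h' : z (j + 1) < z (j + 2))
    (x : ℝ) :
    hatFn K z (j + 1) x = (uniformIco (z (j + 1)) (z (j + 2))).real (Ici x)
      - (uniformIco (z j) (z (j + 1))).real (Ici x) := by
  have hlast : j + 1 ≠ K - 1 := by lia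
  rcases lt_or_ge x (z j) with hx0 | hx0
  · simp [hatFn, hlast, hj, (hx0.trans h).not_ge, hx0.not_ge,
      uniformIco_real_Ici_of_le_left h hx0.le, uniformIco_real_Ici_of_le_left h' (hx0.trans h).le]
  rcases lt_or_ge x (z (j + 1)) with hx1 | hx1
  · have hne := (sub_pos.2 h).ne'
    have hhat : hatFn K z (j + 1) x = (x - z j) / (z (j + 1) - z j) := by
      simp [hatFn, hlast, hx1.not_ge, hx0, hx1.le]
    rw [hhat, uniformIco_real_Ici_of_mem_Icc ⟨hx0, hx1.le⟩,
      uniformIco_real_Ici_of_le_left h' hx1.le]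
    field_simp
    ring
  rcases le_or_gt x (z (j + 2)) with hx2 | hx2
  · simp [hatFn, hlast, hj, hx1, hx2, uniformIco_real_Ici_of_mem_Icc ⟨hx1, hx2⟩,
      uniformIco_real_Ici_of_right_le hx1]
  · simp [hatFn, hlast, hx2.not_ge, (h'.trans hx2).not_ge, uniformIco_real_Ici_of_right_le hx1,
      uniformIco_real_Ici_of_right_le hx2.le]

lemma hatFn_last {j : ℕ} (hj : j + 2 = K) (h : z j < z (j + 1)) (x : ℝ) :
    hatFn K z (j + 1) x = 1 - (uniformIco (z j) (z (j + 1))).real (Ici x) := by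
  subst hj
  rcases lt_or_ge x (z j) with hx0 | hx0
  · simp [hatFn, (hx0.trans h).not_ge, hx0.not_ge, uniformIco_real_Ici_of_le_left h hx0.le]
  rcases lt_or_ge x (z (j + 1)) with hx1 | hx1
  · have hne := (sub_pos.2 h).ne'
    have hhat : hatFn (j + 2) z (j + 1) x = (x - z j) / (z (j + 1) - z j) := by
      simp [hatFn, hx1.not_ge, hx0, hx1.le]
    rw [hhat, uniformIco_real_Ici_of_mem_Icc ⟨hx0, hx1.le⟩]
    field_simp
    ring
  · simp [hatFn, hx1, uniformIco_real_Ici_of_right_le hx1]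

lemma sum_hatFn_range_succ (hz : ∀ i, i + 1 < K → z i < z (i + 1)) {i : ℕ} (hi : i + 1 < K)
    (x : ℝ) :
    ∑ j ∈ Finset.range (i + 1), hatFn K z j x = (uniformIco (z i) (z (i + 1))).real (Ici x) := by
  induction i with
  | zero => rw [Finset.sum_range_one, hatFn_zero hi (hz 0 hi)]
  | succ i ih =>
    rw [Finset.sum_range_succ, ih (by lia), hatFn_succ hi (hz i (by lia)) (hz (i + 1) hi),
      add_sub_cancel]

lemma sum_hatFn_range (hK : 2 ≤ K) (hz : ∀ i, i + 1 < K → z i < z (i + 1)) (x : ℝ) :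
    ∑ j ∈ Finset.range K, hatFn K z j x = 1 := by
  obtain ⟨i, rfl⟩ := Nat.exists_eq_add_of_le' hK
  rw [Finset.sum_range_succ, sum_hatFn_range_succ hz (by lia), hatFn_last rfl (hz i (by lia)),
    add_sub_cancel]

end Grid

section CramerProj

variable {K : ℕ} {z : ℕ → ℝ} {ν μ : Measure ℝ} {y : ℝ}

lemma ne_zero_of_cramerProj_ne_zero (h : cramerProj K z ν ≠ 0) : ν ≠ 0 := by
  rintro rfl
  exact h (by simp [cramerProj])

lemma cdfFn_cramerProj (K : ℕ) (z : ℕ → ℝ) (ν : Measure ℝ) (y : ℝ) :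
    cdfFn (cramerProj K z ν) y = ∑ j ∈ Finset.range K with z j ≤ y, ∫ x, hatFn K z j x ∂ν := by
  have hnonneg : ∀ j, 0 ≤ ∫ x, hatFn K z j x ∂ν := fun j => integral_nonneg (hatFn_nonneg K z j)
  have hfinite : ∀ j ∈ Finset.range K,
      (ENNReal.ofReal (∫ x, hatFn K z j x ∂ν) • Measure.dirac (z j)) (Iic y) ≠ ∞ :=
    fun _ _ => ENNReal.mul_ne_top ENNReal.ofReal_ne_top (measure_ne_top _ _)
  rw [cdfFn, cramerProj, Measure.finsetSum_apply, ENNReal.toReal_sum hfinite, Finset.sum_filter]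
  refine Finset.sum_congr rfl fun j _ => ?_
  by_cases hj : z j ≤ y <;> simp [hj, hnonneg j]

lemma cdfFn_cramerProj_of_lt (hz : ∀ i, i + 1 < K → z i < z (i + 1)) (hy : y < z 0) :
    cdfFn (cramerProj K z ν) y = 0 := by
  have hempty : {j ∈ Finset.range K | z j ≤ y} = ∅ :=
    Finset.filter_false_of_mem fun j hj => not_le.2 <| hy.trans_le <|
      monotoneOn_grid hz (mem_Iio.2 (by simp at hj; lia)) (Finset.mem_range.1 hj) j.zero_le
  rw [cdfFn_cramerProj, hempty, Finset.sum_empty]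

lemma cdfFn_cramerProj_of_le (hK : 2 ≤ K) (hz : ∀ i, i + 1 < K → z i < z (i + 1))
    [IsProbabilityMeasure ν] (hy : z (K - 1) ≤ y) : cdfFn (cramerProj K z ν) y = 1 := by
  have hall : {j ∈ Finset.range K | z j ≤ y} = Finset.range K :=
    Finset.filter_true_of_mem fun j hj => le_trans
      (monotoneOn_grid hz (Finset.mem_range.1 hj) (mem_Iio.2 (by lia))
        (Nat.le_sub_one_of_lt (Finset.mem_range.1 hj))) hy
  rw [cdfFn_cramerProj, hall, ← integral_finsetSum _ fun j _ => integrable_hatFn K z j ν]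
  simp [sum_hatFn_range hK hz]

lemma cdfFn_cramerProj_of_mem_Ico (hz : ∀ i, i + 1 < K → z i < z (i + 1)) [IsFiniteMeasure ν]
    {i : ℕ} (hi : i + 1 < K) (hy : y ∈ Ico (z i) (z (i + 1))) :
    cdfFn (cramerProj K z ν) y = ∫ s, cdfFn ν s ∂uniformIco (z i) (z (i + 1)) := by
  have hrange : {j ∈ Finset.range K | z j ≤ y} = Finset.range (i + 1) := by
    ext j
    rw [Finset.mem_filter, Finset.mem_range, Finset.mem_range]
    constructor
    · rintro ⟨hj, hjy⟩
      by_contra hij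
      exact (hy.2.trans_le (monotoneOn_grid hz hi hj (not_lt.1 hij))).not_ge hjy
    · intro hj
      exact ⟨by lia, (monotoneOn_grid hz (mem_Iio.2 (by lia)) (mem_Iio.2 (by lia))
        (Nat.lt_succ_iff.1 hj)).trans hy.1⟩
  rw [cdfFn_cramerProj, hrange, ← integral_finsetSum _ fun j _ => integrable_hatFn K z j ν]
  simp only [sum_hatFn_range_succ hz hi]
  exact (integral_cdfFn_eq_integral_real_Ici _ ν).symm

lemma setLIntegral_Ico_cell_sq_cdfFn_cramerProj_sub_le
    (hz : ∀ i, i + 1 < K → z i < z (i + 1)) [IsProbabilityMeasure ν] [IsProbabilityMeasure μ]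
    {W : ℝ} {i : ℕ} (hi : i + 1 < K) (hW : z (i + 1) - z i ≤ W) :
    ∫⁻ y in Ico (z i) (z (i + 1)),
        ENNReal.ofReal ((cdfFn (cramerProj K z ν) y - cdfFn μ y) ^ 2)
      ≤ (∫⁻ y in Ico (z i) (z (i + 1)), ENNReal.ofReal ((cdfFn ν y - cdfFn μ y) ^ 2))
        + ENNReal.ofReal (W * (cdfFn μ (z (i + 1)) - cdfFn μ (z i))) := by
  have hlt := hz i hi
  have hcost : (z (i + 1) - z i) * ((cdfFn μ (z (i + 1)) - cdfFn μ (z i)) / 2) ^ 2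
      ≤ W * (cdfFn μ (z (i + 1)) - cdfFn μ (z i)) := by
    have hinc : 0 ≤ cdfFn μ (z (i + 1)) - cdfFn μ (z i) :=
      sub_nonneg.2 (monotone_cdfFn μ hlt.le)
    refine mul_le_mul hW ?_ (sq_nonneg _) ((sub_pos.2 hlt).le.trans hW)
    nlinarith [cdfFn_le_one μ (z (i + 1)), cdfFn_nonneg μ (z i)]
  calc ∫⁻ y in Ico (z i) (z (i + 1)),
        ENNReal.ofReal ((cdfFn (cramerProj K z ν) y - cdfFn μ y) ^ 2)
      = ∫⁻ y in Ico (z i) (z (i + 1)),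
          ENNReal.ofReal ((∫ s, cdfFn ν s ∂uniformIco (z i) (z (i + 1)) - cdfFn μ y) ^ 2) :=
        setLIntegral_congr_fun measurableSet_Ico fun y hy => by
          rw [cdfFn_cramerProj_of_mem_Ico hz hi hy]
    _ ≤ _ := setLIntegral_sq_integral_cdfFn_sub_le hlt ν μ
    _ ≤ _ := by gcongr

lemma setLIntegral_Ico_sq_cdfFn_cramerProj_sub_le (hz : ∀ i, i + 1 < K → z i < z (i + 1))
    [IsProbabilityMeasure ν] [IsProbabilityMeasure μ] {W : ℝ}
    (hW : ∀ i, i + 1 < K → z (i + 1) - z i ≤ W) {n : ℕ} (hn : n < K) :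
    ∫⁻ y in Ico (z 0) (z n), ENNReal.ofReal ((cdfFn (cramerProj K z ν) y - cdfFn μ y) ^ 2)
      ≤ (∫⁻ y in Ico (z 0) (z n), ENNReal.ofReal ((cdfFn ν y - cdfFn μ y) ^ 2))
        + ENNReal.ofReal (W * (cdfFn μ (z n) - cdfFn μ (z 0))) := by
  induction n with
  | zero => simp
  | succ n ih =>
    have hlt := hz n hn
    have hmono := monotone_cdfFn μ
    have h0n : z 0 ≤ z n :=
      monotoneOn_grid hz (mem_Iio.2 (by lia)) (mem_Iio.2 (by lia)) n.zero_le
    have hsplit : ∀ f : ℝ → ℝ≥0∞, ∫⁻ y in Ico (z 0) (z (n + 1)), f y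
        = (∫⁻ y in Ico (z 0) (z n), f y) + ∫⁻ y in Ico (z n) (z (n + 1)), f y := fun f => by
      rw [← lintegral_union measurableSet_Ico (Ico_disjoint_Ico_same),
        Ico_union_Ico_eq_Ico h0n hlt.le]
    have hW0 : 0 ≤ W := (sub_pos.2 hlt).le.trans (hW n hn)
    have hadd : ENNReal.ofReal (W * (cdfFn μ (z (n + 1)) - cdfFn μ (z 0)))
        = ENNReal.ofReal (W * (cdfFn μ (z n) - cdfFn μ (z 0)))
          + ENNReal.ofReal (W * (cdfFn μ (z (n + 1)) - cdfFn μ (z n))) := by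
      rw [← ENNReal.ofReal_add (mul_nonneg hW0 (sub_nonneg.2 (hmono h0n)))
        (mul_nonneg hW0 (sub_nonneg.2 (hmono hlt.le)))]
      ring_nf
    rw [hsplit, hsplit, hadd, add_add_add_comm]
    exact add_le_add (ih (by lia))
      (setLIntegral_Ico_cell_sq_cdfFn_cramerProj_sub_le hz hn (hW n hn))

lemma cramerEnergy_cramerProj_le (hK : 2 ≤ K) (hz : ∀ i, i + 1 < K → z i < z (i + 1))
    [IsProbabilityMeasure ν] [IsProbabilityMeasure μ] {W δ q : ℝ}
    (hW : ∀ i, i + 1 < K → z (i + 1) - z i ≤ W) (hδ : 0 ≤ δ)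
    (hμ : ∀ᵐ t ∂μ, t ∈ Icc (z 0 - δ) (z (K - 1) + δ)) (hleft : cdfFn μ (z 0) ≤ q)
    (hright : 1 - cdfFn μ (z (K - 1)) ≤ q) :
    cramerEnergy (cramerProj K z ν) μ
      ≤ cramerEnergy ν μ + ENNReal.ofReal (W + 2 * q ^ 2 * δ) := by
  have hW0 : 0 ≤ W := (sub_pos.2 (hz 0 hK)).le.trans (hW 0 hK)
  have hgrid : z 0 ≤ z (K - 1) :=
    monotoneOn_grid hz (mem_Iio.2 (by lia)) (mem_Iio.2 (by lia)) (Nat.zero_le _)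
  have hmiddle : ∫⁻ y in Ico (z 0) (z (K - 1)),
      ENNReal.ofReal ((cdfFn (cramerProj K z ν) y - cdfFn μ y) ^ 2)
        ≤ cramerEnergy ν μ + ENNReal.ofReal W := by
    refine (setLIntegral_Ico_sq_cdfFn_cramerProj_sub_le hz hW (by lia)).trans
      (add_le_add (setLIntegral_le_lintegral _ _) (ENNReal.ofReal_le_ofReal ?_))
    exact mul_le_of_le_one_right hW0
      (by linarith [cdfFn_le_one μ (z (K - 1)), cdfFn_nonneg μ (z 0)])
  calc cramerEnergy (cramerProj K z ν) μ
      ≤ ENNReal.ofReal (q ^ 2 * δ) + (cramerEnergy ν μ + ENNReal.ofReal W)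
          + ENNReal.ofReal (q ^ 2 * δ) := by
        rw [cramerEnergy, lintegral_eq_Iio_add_Ico_add_Ici hgrid]
        exact add_le_add_three
          (setLIntegral_Iio_sq_cdfFn_sub_le (fun _ => cdfFn_cramerProj_of_lt hz)
            (hμ.mono fun _ h => h.1) hleft) hmiddle
          (setLIntegral_Ici_sq_cdfFn_sub_le (fun _ => cdfFn_cramerProj_of_le hK hz)
            (hμ.mono fun _ h => h.2) hright)
    _ = cramerEnergy ν μ + ENNReal.ofReal (W + 2 * q ^ 2 * δ) := by
        rw [show W + 2 * q ^ 2 * δ = q ^ 2 * δ + W + q ^ 2 * δ by ring,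
          ENNReal.ofReal_add (by positivity) (by positivity),
          ENNReal.ofReal_add (by positivity) hW0]
        ring

end CramerProj

section BellmanOp

lemma aemeasurable_of_bind_ne_zero {Ω E : Type*} [MeasurableSpace Ω] [MeasurableSpace E]
    {P : Measure Ω} {κ : Ω → Measure E} (h : P.bind κ ≠ 0) : AEMeasurable κ P := by
  contrapose! h
  rw [Measure.bind, Measure.map_of_not_aemeasurable h, Measure.join_zero]

variable {X A : Type} [Fintype A] [MeasurableSpace A]
  {γ : ℝ} {pol : X → Measure A} {η μ : X × A → Measure ℝ}

/-- The distribution of `r + γ * G`, where `G` is drawn from the return distribution `η` at the next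
state-action pair, given the reward `r` and the next state: the kernel along which `bellmanOp`
composes the transition measure. -/
def bellmanKernel (γ : ℝ) (pol : X → Measure A) (η : X × A → Measure ℝ) (rx : ℝ × X) : Measure ℝ :=
  ∑ a, pol rx.2 {a} • (η (rx.2, a)).map fun t => rx.1 + γ * t

lemma bellmanKernel_univ [∀ xa, IsProbabilityMeasure (η xa)] (rx : ℝ × X) :
    bellmanKernel γ pol η rx univ = ∑ a, pol rx.2 {a} := by
  simp [bellmanKernel, Measure.map_apply (show Measurable fun t => rx.1 + γ * t by fun_prop)]

lemma cramerEnergy_bellmanKernel_le (hγ : 0 ≤ γ) [∀ xa, IsProbabilityMeasure (η xa)]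
    [∀ xa, IsProbabilityMeasure (μ xa)] {rx : ℝ × X} (hpol : ∑ a, pol rx.2 {a} = 1) :
    cramerEnergy (bellmanKernel γ pol η rx) (bellmanKernel γ pol μ rx)
      ≤ ENNReal.ofReal γ * ⨆ xa, cramerEnergy (η xa) (μ xa) := by
  have hprob : ∀ (ν : Measure ℝ) [IsProbabilityMeasure ν],
      IsProbabilityMeasure (ν.map fun t => rx.1 + γ * t) :=
    fun ν _ => Measure.isProbabilityMeasure_map (by fun_prop)
  calc cramerEnergy (bellmanKernel γ pol η rx) (bellmanKernel γ pol μ rx)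
      ≤ ∑ a, pol rx.2 {a} * cramerEnergy ((η (rx.2, a)).map fun t => rx.1 + γ * t)
          ((μ (rx.2, a)).map fun t => rx.1 + γ * t) := cramerEnergy_sum_smul_le hpol _ _
    _ ≤ ∑ a, pol rx.2 {a} * (ENNReal.ofReal γ * ⨆ xa, cramerEnergy (η xa) (μ xa)) := by
        refine Finset.sum_le_sum fun a _ => mul_le_mul_right ?_ _
        rw [cramerEnergy_map_const_add_mul hγ]
        exact mul_le_mul_right (le_iSup (fun xa => cramerEnergy (η xa) (μ xa)) (rx.2, a)) _
    _ = ENNReal.ofReal γ * ⨆ xa, cramerEnergy (η xa) (μ xa) := by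
        rw [← Finset.sum_mul, hpol, one_mul]

lemma ae_isProbabilityMeasure_bellmanKernel [MeasurableSpace X] {P : Measure (ℝ × X)}
    [∀ xa, IsProbabilityMeasure (η xa)] (hpol : ∀ᵐ rx ∂P, ∑ a, pol rx.2 {a} = 1) :
    ∀ᵐ rx ∂P, IsProbabilityMeasure (bellmanKernel γ pol η rx) := by
  filter_upwards [hpol] with rx hrx
  exact ⟨(bellmanKernel_univ rx).trans hrx⟩

variable [Fintype X] [MeasurableSpace X] {p : X × A → Measure (ℝ × X)} {xa : X × A}

lemma aemeasurable_bellmanKernel (hT : bellmanOp γ p pol η xa ≠ 0) :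
    AEMeasurable (bellmanKernel γ pol η) (p xa) :=
  aemeasurable_of_bind_ne_zero hT

-- Singletons need not be measurable in `A`, so a priori their masses only sum to at least `1`;
-- equality holds because the Bellman update has total mass `1`.
lemma ae_sum_policy_singleton_eq_one [IsProbabilityMeasure (p xa)]
    [∀ x, IsProbabilityMeasure (pol x)] [∀ xa, IsProbabilityMeasure (η xa)]
    (hT : IsProbabilityMeasure (bellmanOp γ p pol η xa)) :
    ∀ᵐ rx ∂p xa, ∑ a, pol rx.2 {a} = 1 := by
  have hκ := aemeasurable_bellmanKernel hT.ne_zero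
  have hge : ∀ rx, 1 ≤ bellmanKernel γ pol η rx univ := fun rx => by
    rw [bellmanKernel_univ (η := η), ← measure_univ (μ := pol rx.2), ← iUnion_of_singleton]
    exact measure_iUnion_fintype_le (pol rx.2) fun a => {a}
  have hmean : ∫⁻ rx, bellmanKernel γ pol η rx univ ∂p xa = 1 :=
    (Measure.bind_apply MeasurableSet.univ hκ).symm.trans hT.measure_univ
  filter_upwards [ae_eq_of_ae_le_of_lintegral_le (ae_of_all (p xa) hge) (by simp)
    ((Measure.measurable_coe MeasurableSet.univ).comp_aemeasurable hκ) (by simp [hmean])]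
    with rx hrx
  rw [← bellmanKernel_univ (η := η), ← hrx]

lemma isProbabilityMeasure_bellmanOp_of_ne_zero [IsProbabilityMeasure (p xa)]
    [∀ x, IsProbabilityMeasure (pol x)] [∀ xa, IsProbabilityMeasure (η xa)]
    [∀ xa, IsProbabilityMeasure (μ xa)] (hTμ : IsProbabilityMeasure (bellmanOp γ p pol μ xa))
    (hTη : bellmanOp γ p pol η xa ≠ 0) : IsProbabilityMeasure (bellmanOp γ p pol η xa) :=
  isProbabilityMeasure_bind (aemeasurable_bellmanKernel hTη)
    (ae_isProbabilityMeasure_bellmanKernel (ae_sum_policy_singleton_eq_one hTμ))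

lemma cramerEnergy_bellmanOp_le (hγ : 0 ≤ γ) [IsProbabilityMeasure (p xa)]
    [∀ x, IsProbabilityMeasure (pol x)] [∀ xa, IsProbabilityMeasure (η xa)]
    [∀ xa, IsProbabilityMeasure (μ xa)] (hTη : IsProbabilityMeasure (bellmanOp γ p pol η xa))
    (hTμ : IsProbabilityMeasure (bellmanOp γ p pol μ xa)) :
    cramerEnergy (bellmanOp γ p pol η xa) (bellmanOp γ p pol μ xa)
      ≤ ENNReal.ofReal γ * ⨆ xa, cramerEnergy (η xa) (μ xa) := by
  have hpol := ae_sum_policy_singleton_eq_one hTη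
  calc cramerEnergy (bellmanOp γ p pol η xa) (bellmanOp γ p pol μ xa)
      ≤ ∫⁻ rx, cramerEnergy (bellmanKernel γ pol η rx) (bellmanKernel γ pol μ rx) ∂p xa :=
        cramerEnergy_bind_le (aemeasurable_bellmanKernel hTη.ne_zero)
          (aemeasurable_bellmanKernel hTμ.ne_zero) (ae_isProbabilityMeasure_bellmanKernel hpol)
          (ae_isProbabilityMeasure_bellmanKernel hpol)
    _ ≤ ∫⁻ _, ENNReal.ofReal γ * ⨆ xa, cramerEnergy (η xa) (μ xa) ∂p xa := by
        refine lintegral_mono_ae ?_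
        filter_upwards [hpol] with rx hrx using cramerEnergy_bellmanKernel_le hγ hrx
    _ = ENNReal.ofReal γ * ⨆ xa, cramerEnergy (η xa) (μ xa) := by simp

end BellmanOp

lemma supCramer_sq {X A : Type} [Fintype X] [Fintype A] [Nonempty X] [Nonempty A]
    {η μ : X × A → Measure ℝ} [∀ xa, IsFiniteMeasure (η xa)] [∀ xa, IsFiniteMeasure (μ xa)]
    (hfin : ∀ xa, cramerEnergy (η xa) (μ xa) ≠ ∞) :
    supCramer η μ ^ 2 = (⨆ xa, cramerEnergy (η xa) (μ xa)).toReal := by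
  simp only [supCramer, cramerDist_eq_sqrt_toReal_cramerEnergy]
  rw [Real.iSup_pow fun _ => Real.sqrt_nonneg _, ENNReal.toReal_iSup hfin]
  exact iSup_congr fun _ => Real.sq_sqrt ENNReal.toReal_nonneg

lemma toReal_le_of_le_ofReal_mul_add {E : ℝ≥0∞} {γ B : ℝ} (hγ0 : 0 ≤ γ) (hγ1 : γ < 1) (hB : 0 ≤ B)
    (hE : E ≠ ∞) (hle : E ≤ ENNReal.ofReal γ * E + ENNReal.ofReal B) :
    E.toReal ≤ 1 / (1 - γ) * B := by
  have hreal : E.toReal ≤ γ * E.toReal + B := by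
    refine ENNReal.toReal_le_of_le_ofReal (by positivity) ?_
    rwa [ENNReal.ofReal_add (by positivity) hB, ENNReal.ofReal_mul hγ0, ENNReal.ofReal_toReal hE]
  rw [one_div_mul_eq_div, le_div_iff₀ (sub_pos.2 hγ1)]
  linarith

lemma supCramer_sq_le_of_cramerEnergy_le {X A : Type} [Fintype X] [Fintype A] [Nonempty X]
    [Nonempty A] {η μ : X × A → Measure ℝ} [∀ xa, IsFiniteMeasure (η xa)]
    [∀ xa, IsFiniteMeasure (μ xa)] {γ B : ℝ} (hγ0 : 0 ≤ γ) (hγ1 : γ < 1) (hB : 0 ≤ B)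
    (hfin : ∀ xa, cramerEnergy (η xa) (μ xa) ≠ ∞)
    (hle : ∀ xa, cramerEnergy (η xa) (μ xa)
      ≤ ENNReal.ofReal γ * (⨆ xa, cramerEnergy (η xa) (μ xa)) + ENNReal.ofReal B) :
    supCramer η μ ^ 2 ≤ 1 / (1 - γ) * B := by
  obtain ⟨xa, hmax⟩ := exists_eq_ciSup_of_finite (f := fun xa => cramerEnergy (η xa) (μ xa))
  rw [supCramer_sq hfin]
  exact toReal_le_of_le_ofReal_mul_add hγ0 hγ1 hB (hmax ▸ hfin xa) (iSup_le hle)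

/-- Approximation error bound for the fixed point of the projected
Bellman operator under a misspecified support. -/
theorem cramerDist_fixedPoint_bound_misspecified
    {X A : Type} [Fintype X] [Fintype A] [Nonempty X] [Nonempty A]
    [MeasurableSpace X] [MeasurableSpace A]
    (γ : ℝ) (hγ0 : 0 ≤ γ) (hγ1 : γ < 1)
    (p : X × A → Measure (ℝ × X)) (hp : ∀ xa, IsProbabilityMeasure (p xa))
    (pol : X → Measure A) (hpol : ∀ x, IsProbabilityMeasure (pol x))
    (K : ℕ) (hK : 2 ≤ K) (z : ℕ → ℝ) (hz : ∀ i, i + 1 < K → z i < z (i + 1))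
    -- η_C : the unique fixed point of Π_C T^π, supported on the grid
    (ηC : X × A → Measure ℝ) (hηCprob : ∀ xa, IsProbabilityMeasure (ηC xa))
    (hηCsupp : ∀ xa, ηC xa {w | ∃ i < K, w = z i}ᶜ = 0)
    (hηCfix : ∀ xa, cramerProj K z (bellmanOp γ p pol ηC xa) = ηC xa)
    -- η_π : the true return distribution function, a fixed point of T^π
    (ηπ : X × A → Measure ℝ) (hηπprob : ∀ xa, IsProbabilityMeasure (ηπ xa))
    (hηπfix : ∀ xa, bellmanOp γ p pol ηπ xa = ηπ xa)
    (δ : ℝ) (hδ : 0 < δ) (q : ℝ) (hq : 0 ≤ q)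
    (hηπsupp : ∀ xa, ηπ xa (Set.Icc (z 0 - δ) (z (K - 1) + δ))ᶜ = 0)
    (hηπexcess : ∀ xa,
      ηπ xa (Set.Icc (z 0 - δ) (z 0) ∪ Set.Icc (z (K - 1)) (z (K - 1) + δ))
        ≤ ENNReal.ofReal q) :
    (supCramer ηC ηπ) ^ 2
      ≤ (1 / (1 - γ)) * ((⨆ i : Fin (K - 1), (z (i.1 + 1) - z i.1)) + 2 * q ^ 2 * δ) := by
  have hmesh : ∀ i, i + 1 < K → z (i + 1) - z i ≤ ⨆ i : Fin (K - 1), (z (i.1 + 1) - z i.1) :=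
    fun i hi => le_ciSup (f := fun i : Fin (K - 1) => z (i.1 + 1) - z i.1)
      (finite_range _).bddAbove ⟨i, by lia⟩
  have hmesh_nonneg := (sub_pos.2 (hz 0 hK)).le.trans (hmesh 0 hK)
  have hTπ : ∀ xa, IsProbabilityMeasure (bellmanOp γ p pol ηπ xa) :=
    fun xa => (hηπfix xa).symm ▸ hηπprob xa
  have hTC : ∀ xa, IsProbabilityMeasure (bellmanOp γ p pol ηC xa) := fun xa =>
    isProbabilityMeasure_bellmanOp_of_ne_zero (hTπ xa)
      (ne_zero_of_cramerProj_ne_zero ((hηCfix xa).symm ▸ (hηCprob xa).ne_zero))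
  refine supCramer_sq_le_of_cramerEnergy_le hγ0 hγ1 (by positivity) (fun xa =>
    cramerEnergy_ne_top_of_ae_mem_Icc (ae_mem_Icc_of_ae_mem_grid hz hδ.le (hηCsupp xa))
      (hηπsupp xa)) fun xa => ?_
  obtain ⟨hleft, hright⟩ :=
    cdfFn_le_and_one_sub_cdfFn_le_of_excess (hηπsupp xa) hq (hηπexcess xa)
  have hproj := cramerEnergy_cramerProj_le (ν := bellmanOp γ p pol ηC xa) hK hz hmesh hδ.le
    (hηπsupp xa) hleft hright
  have hcontr := cramerEnergy_bellmanOp_le hγ0 (hTC xa) (hTπ xa)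
  rw [hηCfix] at hproj
  rw [hηπfix] at hcontr
  exact hproj.trans (add_le_add_left hcontr _)

end
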